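/- Let f be a closed relation on a locally compact, σ-compact Hausdorff space X. Then there exist a compact Hausdorff space X̂ and a topological embedding j : X → X̂ with j(X) open and dense in X̂ such that, with f̂ the closure of (j × j)(f) in X̂ × X̂, one has: for all x, y ∈ X, (j x, j y) ∈ 𝒢f̂ if and only if (x,y) ∈ 𝒢f. Moreover, if X is metrizable then X̂ can be chosen to be metrizable. -/

import Mathlib

/-- The image of a set `A` under a relation `f ⊆ X × Y`. -/
def relImage {X Y : Type*} (f : Set (X × Y)) (A : Set X) : Set Y :=
  {y | ∃ x ∈ A, (x, y) ∈ f}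

/-- The reverse (inverse) relation of `f ⊆ X × Y`. -/
def relInv {X Y : Type*} (f : Set (X × Y)) : Set (Y × X) :=
  {p | (p.2, p.1) ∈ f}

/-- Composition of relations: `relComp g f = g ∘ f` (first `f`, then `g`). -/
def relComp {X Y Z : Type*} (g : Set (Y × Z)) (f : Set (X × Y)) : Set (X × Z) :=
  {p | ∃ y, (p.1, y) ∈ f ∧ (y, p.2) ∈ g}

/-- A relation on `X` is transitive. -/
def RelTrans {X : Type*} (f : Set (X × X)) : Prop :=
  ∀ x y z : X, (x, y) ∈ f → (y, z) ∈ f → (x, z) ∈ f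

/-- `gRel f` is the smallest closed transitive relation containing `f`:
the intersection of all closed transitive relations containing `f`. -/
def gRel {X : Type*} [TopologicalSpace X] (f : Set (X × X)) : Set (X × X) :=
  ⋂₀ {g : Set (X × X) | f ⊆ g ∧ IsClosed g ∧ RelTrans g}

/-- `(Xh, j)` is a dynamic compactification of the dynamical system `(X, f)`: `Xh`
is compact Hausdorff, `j` is a topological embedding with open dense image, and with
`f̂` the closure of `(j × j)(f)` one has `(j x, j y) ∈ 𝒢f̂ ↔ (x, y) ∈ 𝒢f`. -/
def IsDynamicCompactification {X : Type u} [TopologicalSpace X] (f : Set (X × X))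
    (Xh : Type u) [TopologicalSpace Xh] (j : X → Xh) : Prop :=
  CompactSpace Xh ∧ T2Space Xh ∧ Topology.IsEmbedding j ∧
    IsOpen (Set.range j) ∧ Dense (Set.range j) ∧
    ∀ x y : X, (j x, j y) ∈ gRel (closure (Prod.map j j '' f)) ↔ (x, y) ∈ gRel f

open Set Topology TopologicalSpace

lemma dc_step {Y : Type*} [TopologicalSpace Y] [LocallyCompactSpace Y] [T2Space Y]
    (R : Set (Y × Y)) (hR : IsClosed R) (htr : RelTrans R)
    (d B : Set Y) (hd : IsClosed d) (hB : IsClosed B)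
    (hdd : ∀ x y, (x, y) ∈ R → y ∈ d → x ∈ d) (hBi : ∀ x y, (x, y) ∈ R → x ∈ B → y ∈ B)
    (hdB : Disjoint d B) (K : Set Y) (hK : IsCompact K)
    (D E : Set Y) (hD : IsCompact D) (hE : IsCompact E)
    (hDE : ∀ b ∈ E, ∀ a ∈ D, (b, a) ∉ R) (hDB : Disjoint D B) (hEd : Disjoint E d) :
    ∃ D' E' : Set Y, (IsCompact D' ∧ IsCompact E' ∧ (∀ b ∈ E', ∀ a ∈ D', (b, a) ∉ R) ∧
      Disjoint D' B ∧ Disjoint E' d) ∧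
      D ⊆ interior D' ∧ E ⊆ interior E' ∧ d ∩ K ⊆ D' ∧ B ∩ K ⊆ E' ∧
      (∀ x ∈ K, ∀ a ∈ D, (x, a) ∈ R → x ∈ D') ∧ (∀ x ∈ K, ∀ b ∈ E, (b, x) ∈ R → x ∈ E') := by
  have hdn : ∀ D : Set Y, IsCompact D → IsCompact (Prod.fst '' (R ∩ (K ×ˢ D))) := fun D hD =>
    ((hK.prod hD).inter_left hR).image continuous_fst
  have hup : ∀ E : Set Y, IsCompact E → IsCompact (Prod.snd '' (R ∩ (E ×ˢ K))) := fun E hE =>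
    ((hE.prod hK).inter_left hR).image continuous_snd
  set D1 := D ∪ (Prod.fst '' (R ∩ (K ×ˢ D)) ∪ d ∩ K) with hD1
  set E1 := E ∪ (Prod.snd '' (R ∩ (E ×ˢ K)) ∪ B ∩ K) with hE1
  have cD1 : IsCompact D1 := hD.union ((hdn D hD).union (hK.inter_left hd))
  have cE1 : IsCompact E1 := hE.union ((hup E hE).union (hK.inter_left hB))
  have D1c : ∀ a ∈ D1, a ∈ D ∨ (∃ a' ∈ D, (a, a') ∈ R) ∨ a ∈ d := by
    rintro a (h | ⟨⟨p, q⟩, ⟨h1, h2⟩, rfl⟩ | h)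
    · exact Or.inl h
    · exact Or.inr (Or.inl ⟨q, h2.2, h1⟩)
    · exact Or.inr (Or.inr h.1)
  have E1c : ∀ a ∈ E1, a ∈ E ∨ (∃ a' ∈ E, (a', a) ∈ R) ∨ a ∈ B := by
    rintro a (h | ⟨⟨p, q⟩, ⟨h1, h2⟩, rfl⟩ | h)
    · exact Or.inl h
    · exact Or.inr (Or.inl ⟨p, h2.1, h1⟩)
    · exact Or.inr (Or.inr h.1)
  rw [Set.disjoint_left] at hDB hEd hdB
  have D1B : ∀ a ∈ D1, a ∉ B := by
    intro a ha hb
    rcases D1c a ha with h | ⟨a', h, h'⟩ | h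
    · exact hDB h hb
    · exact hDB h (hBi _ _ h' hb)
    · exact hdB h hb
  have E1d : ∀ a ∈ E1, a ∉ d := by
    intro a ha hb
    rcases E1c a ha with h | ⟨a', h, h'⟩ | h
    · exact hEd h hb
    · exact hEd h (hdd _ _ h' hb)
    · exact hdB hb h
  have hdis : E1 ×ˢ D1 ⊆ Rᶜ := by
    rintro ⟨b, a⟩ ⟨hb, ha⟩ hba
    simp only at hb ha
    rcases D1c a ha with h | ⟨a', h, h'⟩ | h
    · rcases E1c b hb with k | ⟨b', k, k'⟩ | k
      · exact hDE _ k _ h hba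
      · exact hDE _ k _ h (htr _ _ _ k' hba)
      · exact D1B a ha (hBi _ _ hba k)
    · have := htr _ _ _ hba h'
      rcases E1c b hb with k | ⟨b', k, k'⟩ | k
      · exact hDE _ k _ h this
      · exact hDE _ k _ h (htr _ _ _ k' this)
      · exact D1B a ha (hBi _ _ hba k)
    · exact E1d b hb (hdd _ _ hba h)
  obtain ⟨u, v, hu, hv, hEu, hDv, huv⟩ := generalized_tube_lemma cE1 cD1 hR.isOpen_compl hdis
  obtain ⟨E', cE', h1, h2⟩ := exists_compact_between cE1 (hu.sdiff hd)
    (fun x hx => ⟨hEu hx, E1d x hx⟩)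
  obtain ⟨D', cD', h3, h4⟩ := exists_compact_between cD1 (hv.sdiff hB)
    (fun x hx => ⟨hDv hx, D1B x hx⟩)
  refine ⟨D', E', ⟨cD', cE', ?_, ?_, ?_⟩, ?_, ?_, ?_, ?_, ?_, ?_⟩
  · intro b hb a ha
    exact huv (Set.mk_mem_prod (h2 hb).1 (h4 ha).1)
  · exact Set.disjoint_left.2 fun x hx => (h4 hx).2
  · exact Set.disjoint_left.2 fun x hx => (h2 hx).2
  · exact fun x hx => h3 (Or.inl hx)
  · exact fun x hx => h1 (Or.inl hx)
  · exact fun x hx => interior_subset (h3 (Or.inr (Or.inr hx)))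
  · exact fun x hx => interior_subset (h1 (Or.inr (Or.inr hx)))
  · exact fun x hx a ha h => interior_subset (h3 (Or.inr (Or.inl ⟨(x, a), ⟨h, hx, ha⟩, rfl⟩)))
  · exact fun x hx a ha h => interior_subset (h1 (Or.inr (Or.inl ⟨(a, x), ⟨h, ha, hx⟩, rfl⟩)))

lemma dc_normal {Y : Type*} [TopologicalSpace Y] [LocallyCompactSpace Y] [T2Space Y]
    [SigmaCompactSpace Y]
    (R : Set (Y × Y)) (hR : IsClosed R) (hrf : ∀ x, (x, x) ∈ R) (htr : RelTrans R)
    (d U : Set Y) (hd : IsClosed d) (hU : IsOpen U)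
    (hdd : ∀ x y, (x, y) ∈ R → y ∈ d → x ∈ d) (hUd : ∀ x y, (x, y) ∈ R → y ∈ U → x ∈ U)
    (hdU : d ⊆ U) :
    ∃ v d' : Set Y, IsOpen v ∧ IsClosed d' ∧ (∀ x y, (x, y) ∈ R → y ∈ v → x ∈ v) ∧
      (∀ x y, (x, y) ∈ R → y ∈ d' → x ∈ d') ∧ d ⊆ v ∧ v ⊆ d' ∧ d' ⊆ U := by
  have hBi : ∀ x y, (x, y) ∈ R → x ∈ Uᶜ → y ∈ Uᶜ := fun x y h hx hy => hx (hUd x y h hy)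
  have hdB : Disjoint d Uᶜ := Set.disjoint_left.2 fun x hx h => h (hdU hx)
  let S := {p : Set Y × Set Y // IsCompact p.1 ∧ IsCompact p.2 ∧
    (∀ b ∈ p.2, ∀ a ∈ p.1, (b, a) ∉ R) ∧ Disjoint p.1 Uᶜ ∧ Disjoint p.2 d}
  have step : ∀ (n : ℕ) (p : S), ∃ q : S,
      p.1.1 ⊆ interior q.1.1 ∧ p.1.2 ⊆ interior q.1.2 ∧
      d ∩ compactCovering Y n ⊆ q.1.1 ∧ Uᶜ ∩ compactCovering Y n ⊆ q.1.2 ∧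
      (∀ x ∈ compactCovering Y n, ∀ a ∈ p.1.1, (x, a) ∈ R → x ∈ q.1.1) ∧
      (∀ x ∈ compactCovering Y n, ∀ b ∈ p.1.2, (b, x) ∈ R → x ∈ q.1.2) := by
    rintro n ⟨⟨D, E⟩, h1, h2, h3, h4, h5⟩
    obtain ⟨D', E', h, h'⟩ := dc_step R hR htr d Uᶜ hd hU.isClosed_compl hdd hBi hdB
      (compactCovering Y n) (isCompact_compactCovering Y n) D E h1 h2 h3 h4 h5
    exact ⟨⟨(D', E'), h⟩, h'⟩
  choose nx hnx using step
  let s : ℕ → S := fun n => Nat.rec ⟨(∅, ∅), by simp⟩ nx n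
  have hs : ∀ n, s (n + 1) = nx n (s n) := fun n => rfl
  have mD : Monotone fun n => (s n).1.1 := monotone_nat_of_le_succ fun n => by
    have := (hnx n (s n)).1.trans interior_subset
    exact this
  have mE : Monotone fun n => (s n).1.2 := monotone_nat_of_le_succ fun n => by
    have := (hnx n (s n)).2.1.trans interior_subset
    exact this
  have cov : ∀ (x : Y) (n : ℕ), ∃ m, n ≤ m ∧ x ∈ compactCovering Y m := by
    intro x n
    obtain ⟨k, hk⟩ := exists_mem_compactCovering x
    exact ⟨max n k, le_max_left _ _, compactCovering_subset Y (le_max_right _ _) hk⟩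
  have oD : IsOpen (⋃ n, (s n).1.1) := by
    rw [isOpen_iff_mem_nhds]
    intro x hx
    obtain ⟨n, hn⟩ := mem_iUnion.1 hx
    exact Filter.mem_of_superset (mem_interior_iff_mem_nhds.1 ((hnx n (s n)).1 hn))
      (subset_iUnion (fun n => (s n).1.1) (n + 1))
  have oE : IsOpen (⋃ n, (s n).1.2) := by
    rw [isOpen_iff_mem_nhds]
    intro x hx
    obtain ⟨n, hn⟩ := mem_iUnion.1 hx
    exact Filter.mem_of_superset (mem_interior_iff_mem_nhds.1 ((hnx n (s n)).2.1 hn))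
      (subset_iUnion (fun n => (s n).1.2) (n + 1))
  refine ⟨⋃ n, (s n).1.1, (⋃ n, (s n).1.2)ᶜ, oD, oE.isClosed_compl, ?_, ?_, ?_, ?_, ?_⟩
  · intro x y h hy
    obtain ⟨n, hn⟩ := mem_iUnion.1 hy
    obtain ⟨m, hm, hx⟩ := cov x n
    exact mem_iUnion.2 ⟨m + 1, (hnx m (s m)).2.2.2.2.1 x hx y (mD hm hn) h⟩
  · intro x y h hy hx
    apply hy
    obtain ⟨n, hn⟩ := mem_iUnion.1 hx
    obtain ⟨m, hm, hx⟩ := cov y n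
    exact mem_iUnion.2 ⟨m + 1, (hnx m (s m)).2.2.2.2.2 y hx x (mE hm hn) h⟩
  · intro x hx
    obtain ⟨m, hm, hx'⟩ := cov x 0
    exact mem_iUnion.2 ⟨m + 1, (hnx m (s m)).2.2.1 ⟨hx, hx'⟩⟩
  · intro x hx hx'
    obtain ⟨n, hn⟩ := mem_iUnion.1 hx
    obtain ⟨m, hm⟩ := mem_iUnion.1 hx'
    exact (s (max n m)).2.2.2.1 x (mE (le_max_right n m) hm) x (mD (le_max_left n m) hn) (hrf x)
  · intro x hx
    by_contra hxU
    obtain ⟨m, hm, hx'⟩ := cov x 0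
    exact hx (mem_iUnion.2 ⟨m + 1, (hnx m (s m)).2.2.2.1 ⟨hxU, hx'⟩⟩)

lemma dc_approx_mono {Y : Type*} [TopologicalSpace Y] (R : Set (Y × Y))
    {P : Set Y → Set Y → Prop}
    (hP : ∀ c u, P c u → ∀ x y, (x, y) ∈ R → y ∈ u → x ∈ u)
    (n : ℕ) (c : Urysohns.CU P) {x y : Y} (h : (x, y) ∈ R) : c.approx n x ≤ c.approx n y := by
  induction n generalizing c with
  | zero =>
    by_cases hy : y ∈ c.U
    · have hx := hP _ _ c.P_C_U x y h hy
      simp [Urysohns.CU.approx, hx, hy]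
    · rw [c.approx_of_notMem_U 0 hy]
      exact c.approx_le_one 0 x
  | succ n ih =>
    simp only [Urysohns.CU.approx]
    exact midpoint_le_midpoint (ih _) (ih _)

lemma dc_sep {Y : Type*} [TopologicalSpace Y] [LocallyCompactSpace Y] [T2Space Y]
    [SigmaCompactSpace Y]
    (R : Set (Y × Y)) (hR : IsClosed R) (hrf : ∀ x, (x, x) ∈ R) (htr : RelTrans R)
    (p q : Y) (hpq : (p, q) ∉ R) :
    ∃ h : Y → unitInterval, Continuous h ∧ (∀ x y, (x, y) ∈ R → h x ≤ h y) ∧ h q < h p := by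
  let P : Set Y → Set Y → Prop := fun c u => (∀ x y, (x, y) ∈ R → y ∈ u → x ∈ u) ∧
    ∃ d, IsClosed d ∧ (∀ x y, (x, y) ∈ R → y ∈ d → x ∈ d) ∧ c ⊆ d ∧ d ⊆ u
  have cq : IsClosed {z | (z, q) ∈ R} := hR.preimage (by fun_prop : Continuous fun z => (z, q))
  have cp : IsClosed {z | (p, z) ∈ R} := hR.preimage (by fun_prop : Continuous fun z => (p, z))
  have hsub : {z | (z, q) ∈ R} ⊆ {z | (p, z) ∈ R}ᶜ := fun z hz hz' => hpq (htr _ _ _ hz' hz)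
  let c : Urysohns.CU P :=
  { C := {z | (z, q) ∈ R}
    U := {z | (p, z) ∈ R}ᶜ
    P_C_U := ⟨fun x y h hy hx => hy (htr _ _ _ hx h), {z | (z, q) ∈ R}, cq,
      fun x y h hy => htr _ _ _ h hy, Subset.rfl, hsub⟩
    closed_C := cq
    open_U := cp.isOpen_compl
    subset := hsub
    hP := by
      rintro c u hc ⟨hu, d, hd, hdd, hcd, hdu⟩ huo hcu
      obtain ⟨v, d', h1, h2, h3, h4, h5, h6, h7⟩ := dc_normal R hR hrf htr d u hd huo hdd hu hdu
      have h8 : closure v ⊆ d' := closure_minimal h6 h2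
      exact ⟨v, h1, hcd.trans h5, h8.trans h7, ⟨h3, d, hd, hdd, hcd, h5⟩,
        ⟨hu, d', h2, h4, h8, h7⟩⟩ }
  refine ⟨fun x => ⟨c.lim x, c.lim_mem_Icc x⟩, c.continuous_lim.subtype_mk _, ?_, ?_⟩
  · intro x y h
    exact Subtype.mk_le_mk.2 (ciSup_mono (c.bddAbove_range_approx y)
      fun n => dc_approx_mono R (fun c u h => h.1) n c h)
  · have h0 : c.lim q = 0 := c.lim_of_mem_C q (hrf q)
    have h1 : c.lim p = 1 := c.lim_of_notMem_U p (fun h => h (hrf p))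
    refine Subtype.mk_lt_mk.2 ?_
    rw [h0, h1]; exact one_pos

lemma dc_lyap {X : Type*} [TopologicalSpace X] [LocallyCompactSpace X] [T2Space X]
    [SigmaCompactSpace X] (F : Set (X × X)) (hF : IsClosed F) (htr : RelTrans F)
    (x y : X) (hxy : (x, y) ∉ F) :
    ∃ L1 L2 : X → unitInterval, Continuous L1 ∧ Continuous L2 ∧ (∀ a, L2 a ≤ L1 a) ∧
      (∀ a b, (a, b) ∈ F → L1 a ≤ L2 b) ∧ L2 y < L1 x := by
  let p : X ⊕ X → X := Sum.elim id id
  have hp : Continuous p := continuous_id.sumElim continuous_id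
  let R : Set ((X ⊕ X) × (X ⊕ X)) := {w | (p w.1, p w.2) ∈ F} ∪
    ({w | p w.1 = p w.2} ∩ (Prod.fst ⁻¹' range Sum.inr ∪ Prod.snd ⁻¹' range Sum.inl))
  have hR : IsClosed R := by
    refine IsClosed.union (hF.preimage (by fun_prop)) (IsClosed.inter
      (isClosed_eq (by fun_prop) (by fun_prop)) (IsClosed.union ?_ ?_))
    · exact isClosed_range_inr.preimage continuous_fst
    · exact isClosed_range_inl.preimage continuous_snd
  have hrf : ∀ w, (w, w) ∈ R := by
    rintro (w | w) <;> exact Or.inr ⟨rfl, by simp⟩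
  have hRt : RelTrans R := by
    rintro u v w (h | ⟨h, h'⟩) (k | ⟨k, k'⟩)
    · exact Or.inl (htr _ _ _ h k)
    · left
      simp only [mem_setOf_eq] at h k ⊢
      rwa [← k]
    · left
      simp only [mem_setOf_eq] at h k ⊢
      rwa [h]
    · right
      refine ⟨Eq.trans h k, ?_⟩
      rcases u with u | u <;> rcases v with v | v <;> rcases w with w | w <;> simp_all
  have hne : (Sum.inl x, Sum.inr y) ∉ R := by
    rintro (h | ⟨h, h'⟩)
    · exact hxy h
    · simp at h'
  haveI : WeaklyLocallyCompactSpace (X ⊕ X) := ⟨by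
    rintro (a | a)
    · obtain ⟨K, hK, ha⟩ := exists_compact_mem_nhds a
      exact ⟨_, hK.image continuous_inl, IsOpenEmbedding.inl.image_mem_nhds.2 ha⟩
    · obtain ⟨K, hK, ha⟩ := exists_compact_mem_nhds a
      exact ⟨_, hK.image continuous_inr, IsOpenEmbedding.inr.image_mem_nhds.2 ha⟩⟩
  obtain ⟨h, hc, hm, hl⟩ := dc_sep R hR hrf hRt _ _ hne
  refine ⟨h ∘ Sum.inl, h ∘ Sum.inr, by fun_prop, by fun_prop, ?_, ?_, hl⟩
  · intro a
    exact hm _ _ (Or.inr ⟨rfl, by simp⟩)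
  · intro a b hab
    exact hm _ _ (Or.inl hab)

lemma dc_isClosed_gRel {X : Type*} [TopologicalSpace X] (f : Set (X × X)) : IsClosed (gRel f) :=
  isClosed_sInter fun _ h => h.2.1

lemma dc_trans_gRel {X : Type*} [TopologicalSpace X] (f : Set (X × X)) : RelTrans (gRel f) :=
  fun x y z h k g hg => hg.2.2 x y z (h g hg) (k g hg)

lemma dc_sub_gRel {X : Type*} [TopologicalSpace X] (f : Set (X × X)) : f ⊆ gRel f :=
  fun _ h _ hg => hg.1 h

lemma dc_main {X : Type u} [TopologicalSpace X] [LocallyCompactSpace X]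
    (f : Set (X × X)) {Z : Type u} [TopologicalSpace Z] [CompactSpace Z] [T2Space Z]
    (e : X → Z) (he : IsEmbedding e)
    (H : ∀ x y, (x, y) ∉ gRel f → ∃ g1 g2 : Z → unitInterval, Continuous g1 ∧ Continuous g2 ∧
      (∀ a, g2 (e a) ≤ g1 (e a)) ∧ (∀ a b, (a, b) ∈ f → g1 (e a) ≤ g2 (e b)) ∧
      g2 (e y) < g1 (e x)) :
    IsDynamicCompactification f (closure (range e))
      (fun x => ⟨e x, subset_closure (mem_range_self x)⟩) := by
  set j : X → closure (range e) := fun x => ⟨e x, subset_closure (mem_range_self x)⟩ with hj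
  have hje : IsEmbedding j := he.codRestrict _ _
  have hjd : Dense (range j) := by
    have : range j = Subtype.val ⁻¹' (range e) := by
      ext ⟨z, hz⟩
      simp [hj]
    rw [this]
    rw [Subtype.dense_iff]
    intro z hz
    rwa [Subtype.image_preimage_coe, inter_eq_right.2 subset_closure]
  haveI : CompactSpace (closure (range e)) := isCompact_iff_compactSpace.1 isClosed_closure.isCompact
  refine ⟨inferInstance, inferInstance, hje, ?_, hjd, ?_⟩
  · rw [isOpen_iff_mem_nhds]
    rintro _ ⟨x, rfl⟩
    obtain ⟨K, hK, hxK⟩ := exists_compact_mem_nhds x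
    rw [hje.nhds_eq_comap, Filter.mem_comap] at hxK
    obtain ⟨W, hW, hWK⟩ := hxK
    obtain ⟨V, hVW, hV, hxV⟩ := mem_nhds_iff.1 hW
    refine Filter.mem_of_superset (hV.mem_nhds hxV) ?_
    have h1 : V ⊆ closure (V ∩ range j) := hjd.open_subset_closure_inter hV
    have h2 : V ∩ range j ⊆ j '' K := by
      rintro _ ⟨hv, y, rfl⟩
      exact ⟨y, hWK (hVW hv), rfl⟩
    have h3 : IsClosed (j '' K) := (hK.image hje.continuous).isClosed
    exact h1.trans ((closure_minimal h2 h3).trans (image_subset_range _ _))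
  · intro x y
    constructor
    · intro h
      by_contra hxy
      obtain ⟨g1, g2, c1, c2, h1, h2, h3⟩ := H x y hxy
      have h1' : ∀ z : closure (range e), g2 z ≤ g1 z := by
        have hcl : IsClosed {z | g2 z ≤ g1 z} := isClosed_le c2 c1
        rintro ⟨z, hz⟩
        exact closure_minimal (by rintro _ ⟨a, rfl⟩; exact h1 a) hcl hz
      have hc : IsClosed {w : closure (range e) × closure (range e) | g1 w.1 ≤ g2 w.2} :=
        isClosed_le (by fun_prop) (by fun_prop)
      have := h {w | g1 w.1 ≤ g2 w.2} ⟨closure_minimal (by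
        rintro _ ⟨⟨a, b⟩, hab, rfl⟩
        exact h2 a b hab) hc, hc, fun a b c hab hbc => le_trans (le_trans hab (h1' b)) hbc⟩
      exact absurd h3 (not_lt.2 this)
    · intro h
      exact h (Prod.map j j ⁻¹' gRel (closure (Prod.map j j '' f)))
        ⟨fun w hw => dc_sub_gRel _ (subset_closure (mem_image_of_mem _ hw)),
          (dc_isClosed_gRel _).preimage (hje.continuous.prodMap hje.continuous),
          fun a b c hab hbc => dc_trans_gRel _ _ _ _ hab hbc⟩

/-- Every closed relation on a locally compact, σ-compact Hausdorff
space admits a dynamic compactification; if `X` is metrizable the compactification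
may be chosen metrizable. -/
theorem exists_dynamic_compactification
    {X : Type u} [TopologicalSpace X] [LocallyCompactSpace X]
    [SigmaCompactSpace X] [T2Space X]
    (f : Set (X × X)) (hf : IsClosed f) :
    (∃ (Xh : Type u) (t : TopologicalSpace Xh) (j : X → Xh),
      @IsDynamicCompactification X _ f Xh t j) ∧
    (TopologicalSpace.MetrizableSpace X →
      ∃ (Xh : Type u) (t : TopologicalSpace Xh) (j : X → Xh),
        @IsDynamicCompactification X _ f Xh t j ∧
          @TopologicalSpace.MetrizableSpace Xh t) := by
  have key := fun x y (h : (x, y) ∉ gRel f) =>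
    dc_lyap (gRel f) (dc_isClosed_gRel f) (dc_trans_gRel f) x y h
  refine ⟨?_, ?_⟩
  · refine ⟨_, _, _, dc_main f (Z := StoneCech X) stoneCechUnit isEmbedding_stoneCechUnit ?_⟩
    intro x y h
    obtain ⟨L1, L2, c1, c2, h1, h2, h3⟩ := key x y h
    refine ⟨stoneCechExtend c1, stoneCechExtend c2, continuous_stoneCechExtend c1,
      continuous_stoneCechExtend c2, ?_, ?_, ?_⟩
    · intro a
      simpa only [stoneCechExtend_stoneCechUnit] using h1 a
    · intro a b hab
      simpa only [stoneCechExtend_stoneCechUnit] using h2 a b (dc_sub_gRel f hab)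
    · simpa only [stoneCechExtend_stoneCechUnit] using h3
  · intro hm
    letI := TopologicalSpace.metrizableSpaceMetric X
    haveI : SecondCountableTopology X := EMetric.secondCountable_of_sigmaCompact X
    obtain ⟨F, hF⟩ := Metric.PiNatEmbed.exists_embedding_to_hilbert_cube (X := X)
    let ι := {p : X × X // p ∉ gRel f}
    choose L1 L2 c1 c2 h1 h2 h3 using fun p : ι => key p.1.1 p.1.2 p.2
    obtain ⟨T, hT, hTU⟩ := isOpen_iUnion_countable
      (fun p : ι => {w : X × X | L2 p w.2 < L1 p w.1})
      (fun p => isOpen_lt ((c2 p).comp continuous_snd) ((c1 p).comp continuous_fst))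
    haveI : Countable T := hT
    let Z := (ULift.{u} ℕ → unitInterval) × (T → unitInterval × unitInterval)
    let e : X → Z := fun x => (fun n => F x n.down, fun p => (L1 p x, L2 p x))
    have hc : Continuous e := by
      have := hF.continuous
      refine Continuous.prodMk (continuous_pi fun n => ?_) (continuous_pi fun p => ?_)
      · exact (continuous_apply n.down).comp this
      · exact (c1 p).prodMk (c2 p)
    have he : IsEmbedding e := by
      refine IsEmbedding.of_comp (g := fun z : Z => fun n : ℕ => z.1 ⟨n⟩) hc
        (continuous_pi fun n => (continuous_apply (ULift.up n)).comp continuous_fst) hF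
    refine ⟨_, _, _, dc_main f e he ?_, ?_⟩
    · intro x y h
      have : (x, y) ∈ ⋃ p : ι, {w : X × X | L2 p w.2 < L1 p w.1} :=
        mem_iUnion.2 ⟨⟨(x, y), h⟩, h3 ⟨(x, y), h⟩⟩
      rw [← hTU] at this
      obtain ⟨p, hp, hlt⟩ := mem_iUnion₂.1 this
      refine ⟨fun z => (z.2 ⟨p, hp⟩).1, fun z => (z.2 ⟨p, hp⟩).2,
        continuous_fst.comp ((continuous_apply (⟨p, hp⟩ : T)).comp continuous_snd),
        continuous_snd.comp ((continuous_apply (⟨p, hp⟩ : T)).comp continuous_snd),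
        fun a => h1 p a, fun a b hab => h2 p a b (dc_sub_gRel f hab), hlt⟩
    · haveI : SecondCountableTopology Z := inferInstance
      haveI : MetrizableSpace Z := inferInstance
      infer_instance
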